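/- Let p > 1, a, b > 0 and λ > 0. Let φ ∈ C¹[0,1] satisfy φ(0) = φ(1) = 0, φ(t) = φ(1−t) for all t, φ'(t) ≥ 0 for t ∈ [0, 1/2], ∫₀¹ |φ(t)|^p dt = 1 and ∫₀¹ |φ'(t)|^p dt = λ. Set t₀ = a/(a+b) and define u : [0,1] → ℝ by u(t) = φ(t/(2t₀)) for t ∈ [0, t₀] and u(t) = φ((t + 1 − 2t₀)/(2(1 − t₀))) for t ∈ [t₀, 1]. Then ∫₀¹ |u(t)|^p dt = 1 and ∫₀¹ a^p [(u'(t))⁺]^p + b^p [(u'(t))⁻]^p dt = ((a+b)/2)^p λ; in particular λ^{a,b}_{1,p}(0,1) ≤ ((a+b)/2)^p λ_{1,p}(0,1). -/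

import Mathlib

open Set

/-- `u` is C¹ on `[α, γ]` with derivative `u'` there. -/
def C1On (α γ : ℝ) (u u' : ℝ → ℝ) : Prop :=
  (∀ t ∈ Set.Icc α γ, HasDerivWithinAt u (u' t) (Set.Icc α γ) t) ∧
  ContinuousOn u' (Set.Icc α γ)

/-- Admissible functions on `[0, L]`: C¹ with zero boundary values. -/
def Adm (L : ℝ) (u u' : ℝ → ℝ) : Prop :=
  C1On 0 L u u' ∧ u 0 = 0 ∧ u L = 0

/-- The asymmetric energy integrand `a^p (s⁺)^p + b^p (s⁻)^p`. -/
noncomputable def asymE (p a b s : ℝ) : ℝ :=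
  a ^ p * (max s 0) ^ p + b ^ p * (max (-s) 0) ^ p

/-- The asymmetric flux `a^p (s⁺)^(p-1) - b^p (s⁻)^(p-1)`. -/
noncomputable def asymFlux (p a b s : ℝ) : ℝ :=
  a ^ p * (max s 0) ^ (p - 1) - b ^ p * (max (-s) 0) ^ (p - 1)

/-- The first Dirichlet eigenvalue `λ^{a,b}_{1,p}(0,L)`, as the infimum of the
asymmetric energy over normalized admissible functions. -/
noncomputable def lam1 (p a b L : ℝ) : ℝ :=
  sInf { E : ℝ | ∃ u u' : ℝ → ℝ, Adm L u u' ∧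
    (∫ t in (0:ℝ)..L, |u t| ^ p) = 1 ∧
    E = ∫ t in (0:ℝ)..L, asymE p a b (u' t) }

/-- `u` (a C¹ function on `[0,L]` with derivative `u'` and zero boundary values)
is a weak solution of `-Δ^{a,b}_p u = g` on `(0,L)`. -/
def IsWeakSol (p a b L : ℝ) (u u' g : ℝ → ℝ) : Prop :=
  Adm L u u' ∧
  ∀ φ φ' : ℝ → ℝ, Adm L φ φ' →
    (∫ t in (0:ℝ)..L, asymFlux p a b (u' t) * φ' t) =
      ∫ t in (0:ℝ)..L, g t * φ t

/-- The gluing of `φ : [0,1] → ℝ` at scale `t0`: the two monotone halves of `φ`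
are stretched to `[0,t0]` and `[t0,1]` respectively. -/
noncomputable def glue (φ : ℝ → ℝ) (t0 : ℝ) : ℝ → ℝ := fun t =>
  if t ≤ t0 then φ (t / (2 * t0)) else φ ((t + 1 - 2 * t0) / (2 * (1 - t0)))

/-!
Stretching the rising half of a symmetric `φ` to `[0, t₀]` and the falling half to `[t₀, 1]` keeps
`∫ |φ|^p` and scales the slopes by `1 / (2t₀)` and `1 / (2(1 - t₀))`; for `t₀ = a / (a + b)` the
weights `a` and `b` turn both factors into `(a + b) / 2`. So the glued function is a competitor for
`λ^{a,b}` whose Rayleigh quotient is `((a + b) / 2)^p` times that of `φ`.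

To compare the eigenvalues without an extremal function, take any admissible `w`. On `[0, 1/2]` the
function `ψ(t) = ∫₀ᵗ |w'|` dominates `|w|` with the same energy, and its even reflection about `1/2`
is a symmetric competitor, `C¹` once `|w'|` is cut off to vanish at `1/2`. Removing the cutoff
bounds the left half of `w`; the right half is its mirror image, and the two bounds add up.
-/

open MeasureTheory intervalIntegral

namespace C1On

variable {α β γ c : ℝ} {u u' v v' : ℝ → ℝ}

theorem continuousOn (h : C1On α γ u u') : ContinuousOn u (Icc α γ) :=
  fun t ht => (h.1 t ht).continuousWithinAt

theorem of_hasDerivAt (h : ∀ t, HasDerivAt u (u' t) t) (h' : Continuous u') : C1On α γ u u' :=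
  ⟨fun t _ => (h t).hasDerivWithinAt, h'.continuousOn⟩

theorem mono (h : C1On α γ u u') {δ : ℝ} (hsub : Icc β δ ⊆ Icc α γ) : C1On β δ u u' :=
  ⟨fun t ht => (h.1 t (hsub ht)).mono hsub, h.2.mono hsub⟩

theorem const_mul (h : C1On α γ u u') (c : ℝ) :
    C1On α γ (fun t => c * u t) (fun t => c * u' t) :=
  ⟨fun t ht => (h.1 t ht).const_mul c, h.2.const_mul c⟩

theorem congr (h : C1On α γ u u') (hvu : EqOn v u (Icc α γ)) (hvu' : EqOn v' u' (Icc α γ)) :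
    C1On α γ v v' :=
  ⟨fun t ht => hvu' ht ▸ (h.1 t ht).congr hvu (hvu ht), h.2.congr hvu'⟩

theorem comp {δ : ℝ} (hu : C1On β δ u u') (hv : C1On α γ v v')
    (hmaps : MapsTo v (Icc α γ) (Icc β δ)) :
    C1On α γ (fun t => u (v t)) (fun t => u' (v t) * v' t) :=
  ⟨fun t ht => (hu.1 _ (hmaps ht)).comp t (hv.1 t ht) hmaps,
    (hu.2.comp hv.continuousOn hmaps).mul hv.2⟩

theorem comp_sub_left (h : C1On α γ u u') (c : ℝ) :
    C1On (c - γ) (c - α) (fun t => u (c - t)) (fun t => -u' (c - t)) := by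
  have hsub : C1On (c - γ) (c - α) (fun t => c - t) (fun _ => -1) :=
    of_hasDerivAt (fun t => (hasDerivAt_id t).const_sub c) continuous_const
  simpa only [mul_neg_one] using
    h.comp hsub fun t ht => ⟨by linarith [ht.2], by linarith [ht.1]⟩

theorem eqOn_deriv (hlt : α < γ) (h : C1On α γ u u') (h' : C1On α γ u v') :
    EqOn u' v' (Icc α γ) :=
  fun t ht => (uniqueDiffOn_Icc hlt t ht).eq_deriv _ (h.1 t ht) (h'.1 t ht)

theorem deriv_sub_left_of_symm {L : ℝ} (hL : 0 < L) (h : C1On 0 L u u')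
    (hsym : ∀ t ∈ Icc 0 L, u (L - t) = u t) : ∀ t ∈ Icc 0 L, u' (L - t) = -u' t := by
  have hrefl : C1On 0 L (fun t => u (L - t)) (fun t => -u' (L - t)) := by
    simpa only [sub_self, sub_zero] using h.comp_sub_left L
  intro t ht
  rw [h.eqOn_deriv hL (hrefl.congr (fun s hs => (hsym s hs).symm) fun _ _ => rfl) ht, neg_neg]

theorem union (hαβ : α ≤ β) (hβγ : β ≤ γ) (hleft : C1On α β u u') (hright : C1On β γ u u') :
    C1On α γ u u' := by
  have hderiv_of_notMem {δ ε t : ℝ} (ht : t ∉ Icc δ ε) : HasDerivWithinAt u (u' t) (Icc δ ε) t :=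
    HasFDerivWithinAt.of_notMem_closure (by rwa [isClosed_Icc.closure_eq])
  rw [C1On, ← Icc_union_Icc_eq_Icc hαβ hβγ]
  refine ⟨fun t _ => HasDerivWithinAt.union ?_ ?_,
    hleft.2.union_of_isClosed hright.2 isClosed_Icc isClosed_Icc⟩
  · exact (em (t ∈ Icc α β)).elim (hleft.1 t) hderiv_of_notMem
  · exact (em (t ∈ Icc β γ)).elim (hright.1 t) hderiv_of_notMem

theorem ite_le (hαc : α ≤ c) (hcγ : c ≤ γ) (hu : C1On α c u u') (hv : C1On c γ v v')
    (hval : u c = v c) (hderiv : u' c = v' c) :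
    C1On α γ (fun t => if t ≤ c then u t else v t) (fun t => if t ≤ c then u' t else v' t) := by
  have eqOn_right {f g : ℝ → ℝ} (hfg : f c = g c) :
      EqOn (fun t => if t ≤ c then f t else g t) g (Icc c γ) := by
    intro t ht
    rcases ht.1.eq_or_lt with rfl | hlt
    · exact (if_pos le_rfl).trans hfg
    · exact if_neg hlt.not_ge
  exact union hαc hcγ (hu.congr (fun t ht => if_pos ht.2) fun t ht => if_pos ht.2)
    (hv.congr (eqOn_right hval) (eqOn_right hderiv))

theorem primitive (h : ContinuousOn u (Icc α γ)) : C1On α γ (fun t => ∫ s in α..t, u s) u := by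
  refine ⟨fun t ht => ?_, h⟩
  have : Fact (t ∈ Icc α γ) := ⟨ht⟩
  refine integral_hasDerivWithinAt_right ?_
    (h.stronglyMeasurableAtFilter_nhdsWithin measurableSet_Icc t) (h t ht)
  exact (h.mono (Icc_subset_Icc_right ht.2)).intervalIntegrable_of_Icc ht.1

theorem integral_deriv (h : C1On α γ u u') {t : ℝ} (ht : t ∈ Icc α γ) :
    ∫ s in α..t, u' s = u t - u α := by
  have hsub : Icc α t ⊆ Icc α γ := Icc_subset_Icc_right ht.2
  refine integral_eq_sub_of_hasDerivAt_of_le ht.1 (h.continuousOn.mono hsub) (fun s hs => ?_)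
    ((h.2.mono hsub).intervalIntegrable_of_Icc ht.1)
  exact (h.1 s (hsub (Ioo_subset_Icc_self hs))).hasDerivAt
    (Icc_mem_nhds hs.1 (hs.2.trans_le ht.2))

theorem abs_le_integral_abs_deriv (h : C1On α γ u u') (hα : u α = 0) {t : ℝ}
    (ht : t ∈ Icc α γ) : |u t| ≤ ∫ s in α..t, |u' s| := by
  rw [← sub_zero (u t), ← hα, ← h.integral_deriv ht]
  exact abs_integral_le_integral_abs ht.1

end C1On

section AsymmetricEnergy

variable {p a b c s : ℝ}

theorem asymE_nonneg (ha : 0 ≤ a) (hb : 0 ≤ b) : 0 ≤ asymE p a b s := by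
  unfold asymE
  positivity

theorem asymE_neg : asymE p a b (-s) = asymE p b a s := by
  rw [asymE, asymE, neg_neg, add_comm]

theorem asymE_of_nonneg (hp : p ≠ 0) (ha : 0 ≤ a) (hs : 0 ≤ s) :
    asymE p a b s = (a * |s|) ^ p := by
  rw [asymE, max_eq_left hs, max_eq_right (neg_nonpos.2 hs), Real.zero_rpow hp, mul_zero,
    add_zero, Real.mul_rpow ha (abs_nonneg s), abs_of_nonneg hs]

theorem asymE_of_nonpos (hp : p ≠ 0) (hb : 0 ≤ b) (hs : s ≤ 0) :
    asymE p a b s = (b * |s|) ^ p := by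
  rw [← neg_neg s, asymE_neg, asymE_of_nonneg hp hb (neg_nonneg.2 hs), abs_neg (-s)]

theorem asymE_one_one (hp : p ≠ 0) : asymE p 1 1 s = |s| ^ p := by
  rcases le_total 0 s with hs | hs
  · rw [asymE_of_nonneg hp zero_le_one hs, one_mul]
  · rw [asymE_of_nonpos hp zero_le_one hs, one_mul]

theorem asymE_const_mul (hc : 0 ≤ c) : asymE p a b (c * s) = c ^ p * asymE p a b s := by
  have hmax (r : ℝ) : max (c * r) 0 = c * max r 0 := by
    rw [mul_max_of_nonneg _ _ hc, mul_zero]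
  rw [asymE, asymE, ← mul_neg, hmax, hmax, Real.mul_rpow hc (le_max_right _ _),
    Real.mul_rpow hc (le_max_right _ _)]
  ring

end AsymmetricEnergy

section Integrals

variable {α c γ L p : ℝ} {f g u w w' : ℝ → ℝ}

theorem continuousOn_abs_rpow (hp : 0 ≤ p) {s : Set ℝ} (hf : ContinuousOn f s) :
    ContinuousOn (fun t => |f t| ^ p) s :=
  hf.abs.rpow_const fun _ _ => Or.inr hp

theorem integral_ite_le (hαc : α ≤ c) (hcγ : c ≤ γ) (hf : IntervalIntegrable f volume α c)
    (hg : IntervalIntegrable g volume c γ) :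
    ∫ t in α..γ, (if t ≤ c then f t else g t) = (∫ t in α..c, f t) + ∫ t in c..γ, g t := by
  have hleft : EqOn f (fun t => if t ≤ c then f t else g t) (uIoc α c) := by
    intro t ht
    exact (if_pos (uIoc_of_le hαc ▸ ht).2).symm
  have hright : EqOn g (fun t => if t ≤ c then f t else g t) (uIoc c γ) := by
    intro t ht
    exact (if_neg (uIoc_of_le hcγ ▸ ht).1.not_ge).symm
  rw [← integral_add_adjacent_intervals (hf.congr hleft) (hg.congr hright),
    integral_congr_uIoo (hleft.symm.mono Ioo_subset_Ioc_self),
    integral_congr_uIoo (hright.symm.mono Ioo_subset_Ioc_self)]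

theorem integral_right_half_eq_left_half_of_symm (hL : 0 ≤ L)
    (hsym : ∀ t ∈ Icc 0 L, f (L - t) = f t) :
    ∫ t in L / 2..L, f t = ∫ t in (0 : ℝ)..L / 2, f t := by
  have hreflect := integral_comp_sub_left (a := 0) (b := L / 2) f L
  rw [sub_half, sub_zero] at hreflect
  rw [← hreflect]
  refine integral_congr fun t ht => ?_
  rw [uIcc_of_le (by positivity)] at ht
  exact hsym t ⟨ht.1, ht.2.trans (half_le_self hL)⟩

theorem integral_left_half_of_symm (hL : 0 ≤ L) (hf : IntervalIntegrable f volume 0 L)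
    (hsym : ∀ t ∈ Icc 0 L, f (L - t) = f t) :
    ∫ t in (0 : ℝ)..L / 2, f t = (∫ t in (0 : ℝ)..L, f t) / 2 := by
  have hmid : L / 2 ∈ uIcc 0 L :=
    Icc_subset_uIcc ⟨by positivity, half_le_self hL⟩
  have hsplit := integral_add_adjacent_intervals
    (hf.mono_set (uIcc_subset_uIcc_left hmid)) (hf.mono_set (uIcc_subset_uIcc_right hmid))
  linarith [integral_right_half_eq_left_half_of_symm hL hsym]

theorem integral_abs_rpow_const_mul (hc : 0 ≤ c) :
    ∫ t in α..γ, |c * u t| ^ p = c ^ p * ∫ t in α..γ, |u t| ^ p := by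
  simp_rw [abs_mul, abs_of_nonneg hc, Real.mul_rpow hc (abs_nonneg _)]
  exact intervalIntegral.integral_const_mul _ _

theorem exists_pos_rpow_mul_eq_one (hp : p ≠ 0) {m : ℝ} (hm : 0 < m) :
    ∃ c : ℝ, 0 < c ∧ c ^ p * m = 1 := by
  refine ⟨m⁻¹ ^ p⁻¹, by positivity, ?_⟩
  rw [Real.rpow_inv_rpow (inv_pos.2 hm).le hp, inv_mul_cancel₀ hm.ne']

theorem exists_continuousOn_cutoff (hg : ContinuousOn g (Icc α γ))
    (hg0 : ∀ t ∈ Icc α γ, 0 ≤ g t) (hcγ : c < γ) :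
    ∃ f : ℝ → ℝ, ContinuousOn f (Icc α γ) ∧ (∀ t ∈ Icc α γ, 0 ≤ f t ∧ f t ≤ g t) ∧
      (∀ t ≤ c, f t = g t) ∧ f γ = 0 := by
  have hlen : 0 < γ - c := sub_pos.2 hcγ
  refine ⟨fun t => g t * min 1 ((γ - t) / (γ - c)), hg.mul (by fun_prop),
    fun t ht => ⟨?_, mul_le_of_le_one_right (hg0 t ht) (min_le_left _ _)⟩, fun t ht => ?_, ?_⟩
  · exact mul_nonneg (hg0 t ht) (le_min zero_le_one (div_nonneg (sub_nonneg.2 ht.2) hlen.le))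
  · have hone : 1 ≤ (γ - t) / (γ - c) := (one_le_div hlen).2 (sub_le_sub_left ht γ)
    simp only [min_eq_left hone, mul_one]
  · simp only [sub_self, zero_div, min_eq_right zero_le_one, mul_zero]

theorem C1On.exists_monotone_majorant (hw : C1On α γ w w') (hα : w α = 0) (hcγ : c < γ) :
    ∃ ψ ψ' : ℝ → ℝ, C1On α γ ψ ψ' ∧ ψ α = 0 ∧ ψ' γ = 0 ∧
      (∀ t ∈ Icc α γ, 0 ≤ ψ' t ∧ ψ' t ≤ |w' t|) ∧ ∀ t ∈ Icc α c, |w t| ≤ |ψ t| := by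
  obtain ⟨f, hf, hf_mem, hf_eq, hf_end⟩ :=
    exists_continuousOn_cutoff hw.2.abs (fun t _ => abs_nonneg (w' t)) hcγ
  refine ⟨_, f, .primitive hf, integral_same, hf_end, hf_mem, fun t ht => ?_⟩
  calc
    |w t| ≤ ∫ s in α..t, |w' s| := hw.abs_le_integral_abs_deriv hα ⟨ht.1, ht.2.trans hcγ.le⟩
    _ = ∫ s in α..t, f s := by
      refine integral_congr fun s hs => ?_
      rw [uIcc_of_le ht.1] at hs
      exact (hf_eq s (hs.2.trans ht.2)).symm
    _ ≤ |∫ s in α..t, f s| := le_abs_self _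

end Integrals

/-- The extension of a function on `[0, L / 2]` to `[0, L]` that is even about `L / 2`. -/
noncomputable def evenReflection (L : ℝ) (w : ℝ → ℝ) : ℝ → ℝ := fun t =>
  if t ≤ L / 2 then w t else w (L - t)

/-- The extension of a function on `[0, L / 2]` to `[0, L]` that is odd about `L / 2`; it is the
derivative of `evenReflection L w` when applied to the derivative of `w`. The value at `L / 2` is
kept, so that the extension is odd at the midpoint only if it vanishes there. -/
noncomputable def oddReflection (L : ℝ) (w : ℝ → ℝ) : ℝ → ℝ := fun t =>
  if t ≤ L / 2 then w t else -w (L - t)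

section Reflection

variable {L t : ℝ} {w w' F : ℝ → ℝ}

theorem evenReflection_of_le (ht : t ≤ L / 2) : evenReflection L w t = w t :=
  if_pos ht

theorem evenReflection_of_ge (ht : L / 2 ≤ t) : evenReflection L w t = w (L - t) := by
  rcases ht.eq_or_lt with rfl | hlt
  · rw [evenReflection_of_le le_rfl, sub_half]
  · exact if_neg hlt.not_ge

theorem evenReflection_sub_left : evenReflection L w (L - t) = evenReflection L w t := by
  rcases le_total t (L / 2) with ht | ht
  · rw [evenReflection_of_le ht, evenReflection_of_ge (by linarith), sub_sub_cancel]
  · rw [evenReflection_of_ge ht, evenReflection_of_le (by linarith)]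

theorem apply_evenReflection (f : ℝ → ℝ) :
    f (evenReflection L w t) = evenReflection L (fun s => f (w s)) t :=
  apply_ite f _ _ _

theorem abs_oddReflection :
    |oddReflection L w t| = evenReflection L (fun s => |w s|) t := by
  unfold oddReflection evenReflection
  rw [apply_ite abs, abs_neg]

theorem c1On_evenReflection (hL : 0 ≤ L) (hw : C1On 0 (L / 2) w w') (hend : w' (L / 2) = 0) :
    C1On 0 L (evenReflection L w) (oddReflection L w') := by
  have hreflect : C1On (L / 2) L (fun t => w (L - t)) fun t => -w' (L - t) := by
    simpa only [sub_half, sub_zero] using hw.comp_sub_left L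
  exact hw.ite_le (by positivity) (half_le_self hL) hreflect (by rw [sub_half])
    (by rw [sub_half, hend, neg_zero])

theorem integral_evenReflection (hL : 0 ≤ L) (hF : IntervalIntegrable F volume 0 (L / 2)) :
    ∫ t in (0 : ℝ)..L, evenReflection L F t = 2 * ∫ t in (0 : ℝ)..L / 2, F t := by
  have hreflect : IntervalIntegrable (fun t => F (L - t)) volume (L / 2) L := by
    simpa only [sub_half, sub_zero] using (hF.comp_sub_left L).symm
  unfold evenReflection
  rw [integral_ite_le (by positivity) (half_le_self hL) hF hreflect, integral_comp_sub_left,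
    sub_self, sub_half, two_mul]

end Reflection

section Eigenvalue

variable {p a b L : ℝ} {u u' : ℝ → ℝ}

theorem integral_asymE_nonneg (hL : 0 ≤ L) (ha : 0 ≤ a) (hb : 0 ≤ b) :
    0 ≤ ∫ t in (0 : ℝ)..L, asymE p a b (u t) :=
  integral_nonneg hL fun _ _ => asymE_nonneg ha hb

theorem lam1_nonneg (hL : 0 ≤ L) (ha : 0 ≤ a) (hb : 0 ≤ b) : 0 ≤ lam1 p a b L := by
  refine Real.sInf_nonneg ?_
  rintro _ ⟨u, u', -, -, rfl⟩
  exact integral_asymE_nonneg hL ha hb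

theorem Adm.lam1_le (hL : 0 ≤ L) (ha : 0 ≤ a) (hb : 0 ≤ b) (hu : Adm L u u')
    (hnorm : ∫ t in (0 : ℝ)..L, |u t| ^ p = 1) :
    lam1 p a b L ≤ ∫ t in (0 : ℝ)..L, asymE p a b (u' t) := by
  refine csInf_le ⟨0, ?_⟩ ⟨u, u', hu, hnorm, rfl⟩
  rintro _ ⟨v, v', -, -, rfl⟩
  exact integral_asymE_nonneg hL ha hb

theorem Adm.const_mul (hu : Adm L u u') (c : ℝ) :
    Adm L (fun t => c * u t) (fun t => c * u' t) :=
  ⟨hu.1.const_mul c, mul_eq_zero_of_right c hu.2.1, mul_eq_zero_of_right c hu.2.2⟩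

theorem Adm.lam1_mul_integral_le (hp : p ≠ 0) (hL : 0 ≤ L) (ha : 0 ≤ a) (hb : 0 ≤ b)
    (hu : Adm L u u') :
    lam1 p a b L * ∫ t in (0 : ℝ)..L, |u t| ^ p ≤ ∫ t in (0 : ℝ)..L, asymE p a b (u' t) := by
  have hnonneg : 0 ≤ ∫ t in (0 : ℝ)..L, |u t| ^ p := integral_nonneg hL fun _ _ => by positivity
  rcases hnonneg.eq_or_lt with hzero | hpos
  · rw [← hzero, mul_zero]
    exact integral_asymE_nonneg hL ha hb
  obtain ⟨c, hc, hcnorm⟩ := exists_pos_rpow_mul_eq_one hp hpos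
  have hle := (hu.const_mul c).lam1_le hL ha hb ((integral_abs_rpow_const_mul hc.le).trans hcnorm)
  simp_rw [asymE_const_mul hc.le, intervalIntegral.integral_const_mul] at hle
  refine le_of_mul_le_mul_left ?_ (Real.rpow_pos_of_pos hc p)
  rwa [mul_left_comm, hcnorm, mul_one]

theorem exists_adm_integral_eq_one (hp : 0 < p) (hL : 0 < L) :
    ∃ u u' : ℝ → ℝ, Adm L u u' ∧ ∫ t in (0 : ℝ)..L, |u t| ^ p = 1 := by
  have hbump : Adm L (fun t => t * (L - t)) (fun t => L - 2 * t) := by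
    refine ⟨C1On.of_hasDerivAt (fun t => ?_) (by fun_prop), by ring, by ring⟩
    exact ((hasDerivAt_id' t).mul ((hasDerivAt_id' t).const_sub L)).congr_deriv (by ring)
  have hpos : 0 < ∫ t in (0 : ℝ)..L, |t * (L - t)| ^ p := by
    refine intervalIntegral_pos_of_pos_on ((continuousOn_abs_rpow hp.le
      hbump.1.continuousOn).intervalIntegrable_of_Icc hL.le) (fun t ht => ?_) hL
    exact Real.rpow_pos_of_pos (abs_pos.2 (mul_pos ht.1 (sub_pos.2 ht.2)).ne') p
  obtain ⟨c, hc, hcnorm⟩ := exists_pos_rpow_mul_eq_one hp.ne' hpos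
  exact ⟨_, _, hbump.const_mul c, (integral_abs_rpow_const_mul hc.le).trans hcnorm⟩

end Eigenvalue

/-- The derivative of `glue φ t0`, given the derivative `φ'` of `φ`. At `t0` it takes the value
coming from the left piece. -/
noncomputable def glueDeriv (φ' : ℝ → ℝ) (t0 : ℝ) : ℝ → ℝ := fun t =>
  if t ≤ t0 then φ' (t / (2 * t0)) / (2 * t0)
  else φ' ((t + 1 - 2 * t0) / (2 * (1 - t0))) / (2 * (1 - t0))

section Glue

variable {t0 : ℝ} {φ φ' F : ℝ → ℝ}

theorem apply_glue (f : ℝ → ℝ) (t : ℝ) : f (glue φ t0 t) = glue (fun s => f (φ s)) t0 t :=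
  apply_ite f _ _ _

theorem mapsTo_glue_left (h0 : 0 < t0) :
    MapsTo (fun t => t / (2 * t0)) (Icc 0 t0) (Icc 0 (1 / 2)) := by
  refine fun t ht => ⟨div_nonneg ht.1 (by positivity), ?_⟩
  rw [div_le_iff₀ (by positivity)]
  linarith [ht.2]

theorem mapsTo_glue_right (h1 : t0 < 1) :
    MapsTo (fun t => (t + 1 - 2 * t0) / (2 * (1 - t0))) (Icc t0 1) (Icc (1 / 2) 1) := by
  have hpos : 0 < 2 * (1 - t0) := by linarith
  refine fun t ht => ⟨?_, ?_⟩
  · rw [le_div_iff₀ hpos]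
    linarith [ht.1]
  · rw [div_le_iff₀ hpos]
    linarith [ht.2]

theorem glue_left_joint (h0 : 0 < t0) : t0 / (2 * t0) = 1 / 2 := by
  field_simp

theorem glue_right_joint (h1 : t0 < 1) : (t0 + 1 - 2 * t0) / (2 * (1 - t0)) = 1 / 2 := by
  have hpos : 0 < 1 - t0 := sub_pos.2 h1
  field_simp
  ring

theorem glue_right_end (h1 : t0 < 1) : (1 + 1 - 2 * t0) / (2 * (1 - t0)) = 1 := by
  have hpos : 0 < 1 - t0 := sub_pos.2 h1
  field_simp
  ring

theorem glue_zero (h0 : 0 < t0) : glue φ t0 0 = φ 0 := by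
  rw [glue, if_pos h0.le, zero_div]

theorem glue_one (h1 : t0 < 1) : glue φ t0 1 = φ 1 := by
  rw [glue, if_neg h1.not_ge, glue_right_end h1]

theorem c1On_glue (h0 : 0 < t0) (h1 : t0 < 1) (hφ : C1On 0 1 φ φ') (hmid : φ' (1 / 2) = 0) :
    C1On 0 1 (glue φ t0) (glueDeriv φ' t0) := by
  have hleft : C1On 0 t0 (fun t => φ (t / (2 * t0))) fun t => φ' (t / (2 * t0)) / (2 * t0) := by
    have hscale : C1On 0 t0 (fun t => t / (2 * t0)) fun _ => 1 / (2 * t0) :=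
      .of_hasDerivAt (fun t => (hasDerivAt_id t).div_const _) continuous_const
    simpa only [mul_one_div] using hφ.comp hscale fun t ht =>
      Icc_subset_Icc_right (by norm_num) (mapsTo_glue_left h0 ht)
  have hright : C1On t0 1 (fun t => φ ((t + 1 - 2 * t0) / (2 * (1 - t0))))
      fun t => φ' ((t + 1 - 2 * t0) / (2 * (1 - t0))) / (2 * (1 - t0)) := by
    have hscale : C1On t0 1 (fun t => (t + 1 - 2 * t0) / (2 * (1 - t0)))
        fun _ => 1 / (2 * (1 - t0)) :=
      .of_hasDerivAt (fun t => (((hasDerivAt_id t).add_const 1).sub_const _).div_const _)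
        continuous_const
    simpa only [mul_one_div] using hφ.comp hscale fun t ht =>
      Icc_subset_Icc_left (by norm_num) (mapsTo_glue_right h1 ht)
  exact hleft.ite_le h0.le h1.le hright (by rw [glue_left_joint h0, glue_right_joint h1])
    (by rw [glue_left_joint h0, glue_right_joint h1, hmid, zero_div, zero_div])

theorem integral_glue (h0 : 0 < t0) (h1 : t0 < 1) (hF : ContinuousOn F (Icc 0 1)) :
    ∫ t in (0 : ℝ)..1, glue F t0 t =
      2 * t0 * (∫ t in (0 : ℝ)..1 / 2, F t) +
        2 * (1 - t0) * ∫ t in (1 / 2 : ℝ)..1, F t := by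
  have hleft : ContinuousOn (fun t => F (t / (2 * t0))) (Icc 0 t0) :=
    hF.comp (by fun_prop) fun t ht =>
      Icc_subset_Icc_right (by norm_num) (mapsTo_glue_left h0 ht)
  have hright : ContinuousOn (fun t => F ((t + 1 - 2 * t0) / (2 * (1 - t0)))) (Icc t0 1) :=
    hF.comp (by fun_prop) fun t ht =>
      Icc_subset_Icc_left (by norm_num) (mapsTo_glue_right h1 ht)
  have hpos : 2 * (1 - t0) ≠ 0 := by linarith
  unfold glue
  rw [integral_ite_le h0.le h1.le (hleft.intervalIntegrable_of_Icc h0.le)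
    (hright.intervalIntegrable_of_Icc h1.le), integral_comp_div F (by positivity)]
  simp_rw [add_sub_assoc]
  rw [integral_comp_add_right (fun t => F (t / (2 * (1 - t0)))), integral_comp_div F hpos,
    ← add_sub_assoc, ← add_sub_assoc, zero_div, glue_left_joint h0, glue_right_joint h1,
    glue_right_end h1, smul_eq_mul, smul_eq_mul]

theorem integral_glue_of_symm (h0 : 0 < t0) (h1 : t0 < 1) (hF : ContinuousOn F (Icc 0 1))
    (hsym : ∀ t ∈ Icc (0 : ℝ) 1, F (1 - t) = F t) :
    ∫ t in (0 : ℝ)..1, glue F t0 t = ∫ t in (0 : ℝ)..1, F t := by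
  rw [integral_glue h0 h1 hF, integral_right_half_eq_left_half_of_symm zero_le_one hsym,
    integral_left_half_of_symm zero_le_one (hF.intervalIntegrable_of_Icc zero_le_one) hsym]
  ring

end Glue

section Bound

variable {p a b : ℝ} {φ φ' w w' : ℝ → ℝ}

theorem asymE_glueDeriv (hp : p ≠ 0) (ha : 0 < a) (hb : 0 < b)
    (hpos : ∀ t ∈ Icc (0 : ℝ) (1 / 2), 0 ≤ φ' t) (hneg : ∀ t ∈ Icc (1 / 2 : ℝ) 1, φ' t ≤ 0)
    {t : ℝ} (ht : t ∈ Icc (0 : ℝ) 1) :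
    asymE p a b (glueDeriv φ' (a / (a + b)) t) =
      ((a + b) / 2) ^ p * glue (fun s => |φ' s| ^ p) (a / (a + b)) t := by
  have h0 : 0 < a / (a + b) := by positivity
  have hcompl : 1 - a / (a + b) = b / (a + b) := by field_simp; ring
  have h1 : 0 < 1 - a / (a + b) := hcompl ▸ by positivity
  have hscale {k m s : ℝ} (hm : 0 < m) (hkm : k / m = (a + b) / 2) :
      (k * |s / m|) ^ p = ((a + b) / 2) ^ p * |s| ^ p := by
    rw [← Real.mul_rpow (by positivity) (abs_nonneg s), ← hkm, abs_div, abs_of_pos hm]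
    ring_nf
  unfold glueDeriv glue
  split_ifs with hle
  · rw [asymE_of_nonneg hp ha.le (div_nonneg (hpos _ (mapsTo_glue_left h0 ⟨ht.1, hle⟩))
      (by positivity)), hscale (by positivity) (by field_simp)]
  · rw [asymE_of_nonpos hp hb.le (div_nonpos_of_nonpos_of_nonneg
      (hneg _ (mapsTo_glue_right (sub_pos.1 h1) ⟨(not_le.1 hle).le, ht.2⟩)) (by positivity)),
      hscale (by positivity) (by rw [hcompl]; field_simp)]

theorem exists_deriv_glue (hp : 0 < p) (ha : 0 < a) (hb : 0 < b) (hφ : C1On 0 1 φ φ')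
    (hsym : ∀ t ∈ Icc (0 : ℝ) 1, φ (1 - t) = φ t)
    (hmono : ∀ t ∈ Icc (0 : ℝ) (1 / 2), 0 ≤ φ' t) :
    ∃ u' : ℝ → ℝ, C1On 0 1 (glue φ (a / (a + b))) u' ∧
      (∫ t in (0 : ℝ)..1, |glue φ (a / (a + b)) t| ^ p) = (∫ t in (0 : ℝ)..1, |φ t| ^ p) ∧
      (∫ t in (0 : ℝ)..1, asymE p a b (u' t)) =
        ((a + b) / 2) ^ p * ∫ t in (0 : ℝ)..1, |φ' t| ^ p := by
  have h0 : 0 < a / (a + b) := by positivity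
  have h1 : a / (a + b) < 1 := (div_lt_one (by positivity)).2 (lt_add_of_pos_right a hb)
  have hodd := hφ.deriv_sub_left_of_symm one_pos hsym
  have hmid : φ' (1 / 2) = 0 := by
    have := hodd (1 / 2) (by norm_num)
    rw [sub_half] at this
    linarith
  have hneg : ∀ t ∈ Icc (1 / 2 : ℝ) 1, φ' t ≤ 0 := fun t ht => by
    have := hodd t ⟨by linarith [ht.1], ht.2⟩
    linarith [hmono (1 - t) ⟨by linarith [ht.2], by linarith [ht.1]⟩]
  refine ⟨glueDeriv φ' (a / (a + b)), c1On_glue h0 h1 hφ hmid, ?_, ?_⟩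
  · simp_rw [apply_glue fun s => |s| ^ p]
    exact integral_glue_of_symm h0 h1 (continuousOn_abs_rpow hp.le hφ.continuousOn)
      fun t ht => by rw [hsym t ht]
  · rw [← integral_glue_of_symm h0 h1 (continuousOn_abs_rpow hp.le hφ.2)
      fun t ht => by rw [hodd t ht, abs_neg], ← intervalIntegral.integral_const_mul]
    refine integral_congr fun t ht => asymE_glueDeriv hp.ne' ha hb hmono hneg ?_
    rwa [uIcc_of_le zero_le_one] at ht

theorem Adm.lam1_mul_integral_le_of_symm (hp : 0 < p) (ha : 0 < a) (hb : 0 < b)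
    (hφ : Adm 1 φ φ') (hsym : ∀ t ∈ Icc (0 : ℝ) 1, φ (1 - t) = φ t)
    (hmono : ∀ t ∈ Icc (0 : ℝ) (1 / 2), 0 ≤ φ' t) :
    lam1 p a b 1 * (∫ t in (0 : ℝ)..1, |φ t| ^ p) ≤
      ((a + b) / 2) ^ p * ∫ t in (0 : ℝ)..1, |φ' t| ^ p := by
  have h0 : 0 < a / (a + b) := by positivity
  have h1 : a / (a + b) < 1 := (div_lt_one (by positivity)).2 (lt_add_of_pos_right a hb)
  obtain ⟨u', hu', hnorm, henergy⟩ := exists_deriv_glue hp ha hb hφ.1 hsym hmono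
  have hadm : Adm 1 (glue φ (a / (a + b))) u' :=
    ⟨hu', (glue_zero h0).trans hφ.2.1, (glue_one h1).trans hφ.2.2⟩
  rw [← hnorm, ← henergy]
  exact hadm.lam1_mul_integral_le hp.ne' zero_le_one ha.le hb.le

theorem C1On.lam1_mul_integral_half_le_of_deriv_nonneg (hp : 0 < p) (ha : 0 < a) (hb : 0 < b)
    (hw : C1On 0 (1 / 2) w w') (hw0 : w 0 = 0)
    (hmono : ∀ t ∈ Icc (0 : ℝ) (1 / 2), 0 ≤ w' t) (hend : w' (1 / 2) = 0) :
    lam1 p a b 1 * (∫ t in (0 : ℝ)..1 / 2, |w t| ^ p) ≤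
      ((a + b) / 2) ^ p * ∫ t in (0 : ℝ)..1 / 2, |w' t| ^ p := by
  have hadm : Adm 1 (evenReflection 1 w) (oddReflection 1 w') := by
    have hzero : evenReflection 1 w 0 = 0 := (evenReflection_of_le (by norm_num)).trans hw0
    refine ⟨c1On_evenReflection zero_le_one hw hend, hzero, ?_⟩
    rw [← evenReflection_sub_left, sub_self, hzero]
  have hle := hadm.lam1_mul_integral_le_of_symm hp ha hb (fun _ _ => evenReflection_sub_left)
    fun t ht => (hmono t ht).trans_eq (if_pos ht.2).symm
  have hdouble {f : ℝ → ℝ} (hf : ContinuousOn f (Icc 0 (1 / 2))) :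
      ∫ t in (0 : ℝ)..1, evenReflection 1 (fun s => |f s| ^ p) t =
        2 * ∫ t in (0 : ℝ)..1 / 2, |f t| ^ p :=
    integral_evenReflection zero_le_one
      ((continuousOn_abs_rpow hp.le hf).intervalIntegrable_of_Icc (by norm_num))
  simp_rw [abs_oddReflection, apply_evenReflection fun s => |s| ^ p,
    apply_evenReflection fun s => s ^ p, hdouble hw.continuousOn, hdouble hw.2] at hle
  linarith

theorem C1On.lam1_mul_integral_le_of_lt_half (hp : 0 < p) (ha : 0 < a) (hb : 0 < b)
    (hw : C1On 0 (1 / 2) w w') (hw0 : w 0 = 0) {x : ℝ} (hx : x ∈ Ico (0 : ℝ) (1 / 2)) :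
    lam1 p a b 1 * (∫ t in (0 : ℝ)..x, |w t| ^ p) ≤
      ((a + b) / 2) ^ p * ∫ t in (0 : ℝ)..1 / 2, |w' t| ^ p := by
  obtain ⟨ψ, ψ', hψ, hψ0, hψ'_end, hψ', hwψ⟩ := hw.exists_monotone_majorant hw0 hx.2
  have hint {g : ℝ → ℝ} (hg : ContinuousOn g (Icc 0 (1 / 2))) :
      IntervalIntegrable (fun t => |g t| ^ p) volume 0 (1 / 2) :=
    (continuousOn_abs_rpow hp.le hg).intervalIntegrable_of_Icc (by norm_num)
  have hsub : uIcc 0 x ⊆ uIcc 0 (1 / 2) :=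
    uIcc_subset_uIcc_left (Icc_subset_uIcc ⟨hx.1, hx.2.le⟩)
  have hmass : ∫ t in (0 : ℝ)..x, |w t| ^ p ≤ ∫ t in (0 : ℝ)..1 / 2, |ψ t| ^ p :=
    calc
      ∫ t in (0 : ℝ)..x, |w t| ^ p ≤ ∫ t in (0 : ℝ)..x, |ψ t| ^ p :=
        integral_mono_on hx.1 ((hint hw.continuousOn).mono_set hsub)
          ((hint hψ.continuousOn).mono_set hsub) fun t ht =>
            Real.rpow_le_rpow (abs_nonneg _) (hwψ t ht) hp.le
      _ ≤ ∫ t in (0 : ℝ)..1 / 2, |ψ t| ^ p :=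
        integral_mono_interval le_rfl hx.1 hx.2.le (.of_forall fun t => by positivity)
          (hint hψ.continuousOn)
  have henergy : ∫ t in (0 : ℝ)..1 / 2, |ψ' t| ^ p ≤ ∫ t in (0 : ℝ)..1 / 2, |w' t| ^ p :=
    integral_mono_on (by norm_num) (hint hψ.2) (hint hw.2) fun t ht =>
      Real.rpow_le_rpow (abs_nonneg _)
        ((abs_of_nonneg (hψ' t ht).1).trans_le (hψ' t ht).2) hp.le
  calc
    _ ≤ lam1 p a b 1 * ∫ t in (0 : ℝ)..1 / 2, |ψ t| ^ p :=
      mul_le_mul_of_nonneg_left hmass (lam1_nonneg zero_le_one ha.le hb.le)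
    _ ≤ ((a + b) / 2) ^ p * ∫ t in (0 : ℝ)..1 / 2, |ψ' t| ^ p :=
      hψ.lam1_mul_integral_half_le_of_deriv_nonneg hp ha hb hψ0 (fun t ht => (hψ' t ht).1) hψ'_end
    _ ≤ _ := mul_le_mul_of_nonneg_left henergy (by positivity)

theorem C1On.lam1_mul_integral_half_le (hp : 0 < p) (ha : 0 < a) (hb : 0 < b)
    (hw : C1On 0 (1 / 2) w w') (hw0 : w 0 = 0) :
    lam1 p a b 1 * (∫ t in (0 : ℝ)..1 / 2, |w t| ^ p) ≤
      ((a + b) / 2) ^ p * ∫ t in (0 : ℝ)..1 / 2, |w' t| ^ p := by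
  have hcont : ContinuousOn (fun x => lam1 p a b 1 * ∫ t in (0 : ℝ)..x, |w t| ^ p)
      (Icc 0 (1 / 2)) :=
    (C1On.primitive (continuousOn_abs_rpow hp.le hw.continuousOn)).continuousOn.const_mul _
  have hclosure : closure (Ico (0 : ℝ) (1 / 2)) = Icc 0 (1 / 2) := closure_Ico (by norm_num)
  rw [← hclosure] at hcont
  refine le_on_closure (fun x hx => ?_) hcont continuousOn_const
    (hclosure ▸ right_mem_Icc.2 (by norm_num))
  exact hw.lam1_mul_integral_le_of_lt_half hp ha hb hw0 hx

theorem Adm.lam1_mul_integral_le_rpow_mul (hp : 0 < p) (ha : 0 < a) (hb : 0 < b)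
    (hw : Adm 1 w w') :
    lam1 p a b 1 * (∫ t in (0 : ℝ)..1, |w t| ^ p) ≤
      ((a + b) / 2) ^ p * ∫ t in (0 : ℝ)..1, |w' t| ^ p := by
  obtain ⟨hw, hw0, hw1⟩ := hw
  have hsub : Icc (0 : ℝ) (1 / 2) ⊆ Icc 0 1 := Icc_subset_Icc_right (by norm_num)
  have hreflect : C1On 0 1 (fun t => w (1 - t)) fun t => -w' (1 - t) := by
    simpa only [sub_self, sub_zero] using hw.comp_sub_left 1
  have hleft := (hw.mono hsub).lam1_mul_integral_half_le hp ha hb hw0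
  have hright := (hreflect.mono hsub).lam1_mul_integral_half_le hp ha hb
    (by rw [sub_zero, hw1])
  simp_rw [abs_neg] at hright
  rw [integral_comp_sub_left (fun t => |w t| ^ p), integral_comp_sub_left (fun t => |w' t| ^ p),
    sub_half, sub_zero] at hright
  have hsplit {f : ℝ → ℝ} (hf : ContinuousOn f (Icc 0 1)) :
      (∫ t in (0 : ℝ)..1 / 2, |f t| ^ p) + ∫ t in (1 / 2 : ℝ)..1, |f t| ^ p =
        ∫ t in (0 : ℝ)..1, |f t| ^ p := by
    have hint := (continuousOn_abs_rpow hp.le hf).intervalIntegrable_of_Icc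
      (μ := volume) zero_le_one
    have hmid : (1 / 2 : ℝ) ∈ uIcc 0 1 := Icc_subset_uIcc (by norm_num)
    exact integral_add_adjacent_intervals (hint.mono_set (uIcc_subset_uIcc_left hmid))
      (hint.mono_set (uIcc_subset_uIcc_right hmid))
  rw [← hsplit hw.continuousOn, ← hsplit hw.2, mul_add, mul_add]
  exact add_le_add hleft hright

theorem lam1_le_rpow_mul_lam1_one_one (hp : 0 < p) (ha : 0 < a) (hb : 0 < b) :
    lam1 p a b 1 ≤ ((a + b) / 2) ^ p * lam1 p 1 1 1 := by
  have hfactor : 0 < ((a + b) / 2) ^ p := by positivity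
  obtain ⟨u, u', hu, hu_norm⟩ := exists_adm_integral_eq_one hp one_pos
  rw [← div_le_iff₀' hfactor]
  refine le_csInf ⟨_, u, u', hu, hu_norm, rfl⟩ ?_
  rintro _ ⟨w, w', hw, hw_norm, rfl⟩
  have hle := hw.lam1_mul_integral_le_rpow_mul hp ha hb
  rw [hw_norm, mul_one] at hle
  simp_rw [asymE_one_one hp.ne']
  exact (div_le_iff₀' hfactor).2 hle

end Bound

theorem stmt7_general {p a b : ℝ} (hp : 0 < p) (ha : 0 < a) (hb : 0 < b) :
    (∀ φ φ' : ℝ → ℝ, C1On 0 1 φ φ' → (∀ t ∈ Icc (0 : ℝ) 1, φ (1 - t) = φ t) →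
      (∀ t ∈ Icc (0 : ℝ) (1 / 2), 0 ≤ φ' t) →
      ∃ u' : ℝ → ℝ, C1On 0 1 (glue φ (a / (a + b))) u' ∧
        (∫ t in (0 : ℝ)..1, |glue φ (a / (a + b)) t| ^ p) = (∫ t in (0 : ℝ)..1, |φ t| ^ p) ∧
        (∫ t in (0 : ℝ)..1, asymE p a b (u' t)) =
          ((a + b) / 2) ^ p * ∫ t in (0 : ℝ)..1, |φ' t| ^ p) ∧
    lam1 p a b 1 ≤ ((a + b) / 2) ^ p * lam1 p 1 1 1 :=
  ⟨fun _ _ hφ hsym hmono => exists_deriv_glue hp ha hb hφ hsym hmono,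
    lam1_le_rpow_mul_lam1_one_one hp ha hb⟩

theorem stmt7 (p a b lam : ℝ) (hp : 1 < p) (ha : 0 < a) (hb : 0 < b) (hlam : 0 < lam)
    (φ φ' : ℝ → ℝ) (hφ : Adm 1 φ φ')
    (hsym : ∀ t, φ t = φ (1 - t))
    (hmono : ∀ t ∈ Set.Icc (0:ℝ) (1/2 : ℝ), 0 ≤ φ' t)
    (hnorm : (∫ t in (0:ℝ)..1, |φ t| ^ p) = 1)
    (henergy : (∫ t in (0:ℝ)..1, |φ' t| ^ p) = lam) :
    (∃ u' : ℝ → ℝ, C1On 0 1 (glue φ (a / (a + b))) u' ∧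
      (∫ t in (0:ℝ)..1, |glue φ (a / (a + b)) t| ^ p) = 1 ∧
      (∫ t in (0:ℝ)..1, asymE p a b (u' t)) = ((a + b) / 2) ^ p * lam) ∧
    lam1 p a b 1 ≤ ((a + b) / 2) ^ p * lam1 p 1 1 1 := by
  obtain ⟨hglue, hlam1⟩ := stmt7_general (zero_lt_one.trans hp) ha hb
  refine ⟨?_, hlam1⟩
  simpa only [hnorm, henergy] using hglue φ φ' hφ.1 (fun t _ => (hsym t).symm) hmono
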